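/- Let H be a complex Hilbert space and n a natural number. If W is a finite-dimensional subspace of ℂⁿ ⊗[ℂ] H, then there is a closed subspace V of H of finite codimension (i.e. the quotient H ⧸ V is finite-dimensional over ℂ) such that the image of ℂⁿ ⊗ V in ℂⁿ ⊗ H (under the map induced by the inclusion V → H) intersects W trivially: the intersection of this image with W is the zero subspace. -/

import Mathlib

open TensorProduct

/-!
Every element of `M ⊗ E` is a finite sum of pure tensors, so a finite-dimensional `W ≤ M ⊗ E` lies
in `M ⊗ K` for some finite-dimensional `K ≤ E`. Extending the coordinates of `K` to continuous
functionals on `E`, their common kernel `V` is closed, has finite codimension and meets `K`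
trivially. Since `K → E ⧸ V` stays injective after tensoring with `M` while `M ⊗ V` dies in
`M ⊗ (E ⧸ V)`, also `M ⊗ V` meets `M ⊗ K`, and a fortiori `W`, trivially.
-/

theorem exists_fg_le_range_lTensor_subtype {R M N : Type*} [CommSemiring R]
    [AddCommMonoid M] [Module R M] [AddCommMonoid N] [Module R N]
    {W : Submodule R (M ⊗[R] N)} (hW : W.FG) :
    ∃ K : Submodule R N, K.FG ∧ W ≤ LinearMap.range (K.subtype.lTensor M) := by
  obtain ⟨s, rfl⟩ := hW
  obtain ⟨K, hK, hs⟩ :=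
    TensorProduct.exists_finite_submodule_right_of_setFinite (s : Set (M ⊗[R] N)) s.finite_toSet
  exact ⟨K, Module.Finite.iff_fg.mp hK, Submodule.span_le.mpr hs⟩

theorem disjoint_range_lTensor_subtype {R N : Type*} (M : Type*) [CommRing R]
    [AddCommGroup M] [Module R M] [Module.Flat R M] [AddCommGroup N] [Module R N]
    {p q : Submodule R N} (hpq : Disjoint p q) :
    Disjoint (LinearMap.range (p.subtype.lTensor M)) (LinearMap.range (q.subtype.lTensor M)) := by
  have mkQ_injective : Function.Injective (p.mkQ ∘ₗ q.subtype) := by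
    rw [← LinearMap.ker_eq_bot, LinearMap.ker_comp, p.ker_mkQ]
    exact Submodule.disjoint_iff_comap_eq_bot.mp hpq.symm
  have lTensor_mkQ_injective : Function.Injective (p.mkQ.lTensor M ∘ₗ q.subtype.lTensor M) := by
    rw [← LinearMap.lTensor_comp]
    exact Module.Flat.lTensor_preserves_injective_linearMap _ mkQ_injective
  rw [← lTensor_mkQ, disjoint_comm, LinearMap.disjoint_ker]
  rintro _ ⟨y, rfl⟩ hy
  rw [(map_eq_zero_iff _ lTensor_mkQ_injective).mp hy, map_zero]

theorem exists_isClosed_finiteDimensional_quotient_disjoint {𝕜 E : Type*} [Field 𝕜]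
    [TopologicalSpace 𝕜] [IsTopologicalRing 𝕜] [T1Space 𝕜] [AddCommGroup E] [Module 𝕜 E]
    [TopologicalSpace E] [SeparatingDual 𝕜 E] (K : Submodule 𝕜 E) [FiniteDimensional 𝕜 K] :
    ∃ V : Submodule 𝕜 E, IsClosed (V : Set E) ∧ FiniteDimensional 𝕜 (E ⧸ V) ∧ Disjoint V K := by
  let b := Module.finBasis 𝕜 K
  choose f hf using fun i ↦
    SeparatingDual.dualMap_surjective_iff.mpr K.injective_subtype (b.coord i)
  let F := ContinuousLinearMap.pi f
  refine ⟨F.ker, F.isClosed_ker, Submodule.CoFG.ker F.toLinearMap, ?_⟩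
  rw [disjoint_comm, LinearMap.disjoint_ker]
  intro x hxK hFx
  have coord_eq_zero (i) : b.coord i ⟨x, hxK⟩ = 0 := by
    rw [← hf i]
    exact congrFun hFx i
  exact congrArg Subtype.val (b.forall_coord_eq_zero_iff.mp coord_eq_zero)

theorem exists_closed_finite_codim_lTensor_inf_eq_bot_general {𝕜 M E : Type*} [Field 𝕜]
    [TopologicalSpace 𝕜] [IsTopologicalRing 𝕜] [T1Space 𝕜] [AddCommGroup M] [Module 𝕜 M]
    [AddCommGroup E] [Module 𝕜 E] [TopologicalSpace E] [SeparatingDual 𝕜 E]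
    (W : Submodule 𝕜 (M ⊗[𝕜] E)) [FiniteDimensional 𝕜 W] :
    ∃ V : Submodule 𝕜 E, IsClosed (V : Set E) ∧ FiniteDimensional 𝕜 (E ⧸ V) ∧
      LinearMap.range (LinearMap.lTensor M V.subtype) ⊓ W = ⊥ := by
  have hW : W.FG := Module.Finite.iff_fg.mp inferInstance
  obtain ⟨K, hK, hWK⟩ := exists_fg_le_range_lTensor_subtype hW
  have : FiniteDimensional 𝕜 K := Module.Finite.iff_fg.mpr hK
  obtain ⟨V, hV_closed, hV_codim, hVK⟩ := exists_isClosed_finiteDimensional_quotient_disjoint K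
  exact ⟨V, hV_closed, hV_codim,
    ((disjoint_range_lTensor_subtype M hVK).mono_right hWK).eq_bot⟩

/-- For every finite-dimensional subspace `W` of `ℂⁿ ⊗[ℂ] H` there is a closed
finite-codimensional subspace `V` of `H` with `(ℂⁿ ⊗ V) ∩ W = 0`. -/
theorem exists_closed_finite_codim_lTensor_inf_eq_bot
    {H : Type*} [NormedAddCommGroup H] [InnerProductSpace ℂ H] [CompleteSpace H]
    (n : ℕ) (W : Submodule ℂ ((Fin n → ℂ) ⊗[ℂ] H)) (hW : FiniteDimensional ℂ W) :
    ∃ V : Submodule ℂ H, IsClosed (V : Set H) ∧ FiniteDimensional ℂ (H ⧸ V) ∧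
      LinearMap.range (LinearMap.lTensor (Fin n → ℂ) V.subtype) ⊓ W = ⊥ :=
  exists_closed_finite_codim_lTensor_inf_eq_bot_general W
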